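/- There exist universal constants C₁, C₂, C′, C₆, C₇ > 0 with the following property. Let ρ ∈ (0, 1/3), let N be an integer with C₁·n·log(1/ρ) ≤ N ≤ n^{10}, and fix r ∈ [C₂√n, n]. Let θ₁, …, θ_N be independent random vectors uniformly distributed on S^{n−1}. Then there exists q ≥ 1 − C′(ρ + n/r²) such that with probability at least 1 − e^{−5n}, for every η ∈ F_ρ and every t ∈ ℝ, F(η, t) ≤ C₆·√((n/N)·log(1/ρ)) + (1 + C₇(ρ + n/r² + (log n)²/n + 1/r)) · (√n/r) · φ(q·√n·t/r). -/

import Mathlib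

open MeasureTheory Metric Set
open scoped RealInnerProductSpace

/-- The uniform (rotation-invariant) probability measure on the unit sphere of `ℝⁿ`. -/
noncomputable def uniformSphere (n : ℕ) :
    Measure (sphere (0 : EuclideanSpace ℝ (Fin n)) 1) :=
  (((volume : Measure (EuclideanSpace ℝ (Fin n))).toSphere) Set.univ)⁻¹ •
    (volume : Measure (EuclideanSpace ℝ (Fin n))).toSphere

/-- `φ(r) = e^{−r²/2}`. -/
noncomputable def gphi (r : ℝ) : ℝ := Real.exp (-r ^ 2 / 2)

/-- `F(η,t) = (1/N) ∑_{k=1}^N φ(r⟨η,θ_k⟩ + t)`. -/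
noncomputable def Ffun {n N : ℕ} (r t : ℝ)
    (θ : Fin N → sphere (0 : EuclideanSpace ℝ (Fin n)) 1)
    (η : EuclideanSpace ℝ (Fin n)) : ℝ :=
  (1 / (N : ℝ)) * ∑ k : Fin N, gphi (r * ⟪η, (θ k : EuclideanSpace ℝ (Fin n))⟫ + t)

/-- The joint law of `N` independent uniform random points on `S^{n-1}`. -/
noncomputable def sphereProduct (n N : ℕ) :
    Measure (Fin N → sphere (0 : EuclideanSpace ℝ (Fin n)) 1) :=
  Measure.pi fun _ => uniformSphere n

/-- `x` has all coordinates integer multiples of `s`. -/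
def latticeVec (n : ℕ) (s : ℝ) (x : EuclideanSpace ℝ (Fin n)) : Prop :=
  ∀ i, ∃ m : ℤ, x i = s * m

/-- The net `F_ρ = ((1+ρ)B₂ⁿ \ (1−2ρ)B₂ⁿ) ∩ (ρ/√n)ℤⁿ`. -/
def Fnet (n : ℕ) (ρ : ℝ) : Set (EuclideanSpace ℝ (Fin n)) :=
  (closedBall (0 : EuclideanSpace ℝ (Fin n)) (1 + ρ) \ closedBall 0 (1 - 2 * ρ)) ∩
    {x | latticeVec n (ρ / Real.sqrt n) x}

/-!
Projecting the sphere centrally onto a hyperplane gives the law of `⟪η, θ⟫`: it is the law of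
`‖η‖ sin (arctan s)` for `s` of density proportional to `cos (arctan s) ^ n`. The inequalities
`exp (-s² / 2) ≤ cos (arctan s)` and `cos x ≤ exp (-sin² x / 2)` then dominate this law by a
Gaussian of variance `‖η‖² / (n - 3)`, up to the factor `√(n / (n - 3))`, and integrating `φ`
against that Gaussian bounds the expectation of `F(η, t)` by the second term of the estimate.

For fixed `(η, t)`, Hoeffding's inequality controls the deviation of `F` from its expectation by a
multiple of `√((n / N) log (1 / ρ))` outside an event of probability `exp (-c n log (1 / ρ))`. This
survives a union bound over the net, which has `exp (O(n log (1 / ρ)))` points, and over a grid of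
exponentially many values of `t`. Between grid points both `F` and its expectation are
`1`-Lipschitz in `t`, and when `|t|` exceeds `r ‖η‖ + N` every summand of `F` is at most `1 / N`.
-/

section Polar

variable {E : Type*} [NormedAddCommGroup E] [MeasurableSpace E] [BorelSpace E]

lemma lintegral_comp_smul_addHaar [NormedSpace ℝ E] [FiniteDimensional ℝ E] (μ : Measure E)
    [μ.IsAddHaarMeasure] (g : E → ENNReal) {c : ℝ} (hc : c ≠ 0) :
    ∫⁻ y, g (c • y) ∂μ = ENNReal.ofReal |(c ^ Module.finrank ℝ E)⁻¹| * ∫⁻ y, g y ∂μ := by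
  rw [← smul_eq_mul, ← lintegral_smul_measure, ← Measure.map_addHaar_smul μ hc]
  exact (lintegral_map_equiv g (Homeomorph.smulOfNeZero c hc).toMeasurableEquiv).symm

lemma lintegral_comp_direction_mul_comp_norm [NormedSpace ℝ E] [FiniteDimensional ℝ E]
    [Nontrivial E] (μ : Measure E) [μ.IsAddHaarMeasure] {f : E → ENNReal} (hf : Measurable f)
    {w : ℝ → ENNReal} (hw : Measurable w) :
    ∫⁻ x, f (‖x‖⁻¹ • x) * w ‖x‖ ∂μ =
      (∫⁻ θ : sphere (0 : E) 1, f θ ∂μ.toSphere) *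
        ∫⁻ s : Ioi (0 : ℝ), w s ∂Measure.volumeIoiPow (Module.finrank ℝ E - 1) := by
  rw [← lintegral_prod_mul (by fun_prop) (by fun_prop),
    ← μ.measurePreserving_homeomorphUnitSphereProd.lintegral_comp (by fun_prop)]
  simp only [homeomorphUnitSphereProd_apply_fst_coe, homeomorphUnitSphereProd_apply_snd_coe]
  rw [lintegral_subtype_comap (measurableSet_singleton _).compl
    (fun x : E => f (‖x‖⁻¹ • x) * w ‖x‖), restrict_compl_singleton]

lemma lintegral_norm_mul_comp_norm_div [NormedSpace ℝ E] [FiniteDimensional ℝ E] (μ : Measure E)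
    [μ.IsAddHaarMeasure] (w : ℝ → ENNReal) {c : ℝ} (hc : 0 < c) :
    ∫⁻ y, ENNReal.ofReal ‖y‖ * w (‖y‖ / c) ∂μ =
      ENNReal.ofReal (c ^ (Module.finrank ℝ E + 1)) * ∫⁻ y, ENNReal.ofReal ‖y‖ * w ‖y‖ ∂μ := by
  have norm_smul_inv (y : E) : ‖c⁻¹ • y‖ = ‖y‖ / c := by
    rw [norm_smul, norm_inv, Real.norm_of_nonneg hc.le, inv_mul_eq_div]
  calc ∫⁻ y, ENNReal.ofReal ‖y‖ * w (‖y‖ / c) ∂μ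
      = ∫⁻ y, ENNReal.ofReal (c * ‖c⁻¹ • y‖) * w ‖c⁻¹ • y‖ ∂μ := by
        simp only [norm_smul_inv, mul_div_cancel₀ _ hc.ne']
    _ = ENNReal.ofReal (c ^ Module.finrank ℝ E) *
          ∫⁻ y, ENNReal.ofReal (c * ‖y‖) * w ‖y‖ ∂μ := by
        rw [lintegral_comp_smul_addHaar μ (fun y => ENNReal.ofReal (c * ‖y‖) * w ‖y‖)
          (inv_ne_zero hc.ne'), inv_pow, inv_inv, abs_of_pos (pow_pos hc _)]
    _ = ENNReal.ofReal (c ^ (Module.finrank ℝ E + 1)) * ∫⁻ y, ENNReal.ofReal ‖y‖ * w ‖y‖ ∂μ := by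
        simp only [ENNReal.ofReal_mul hc.le, mul_assoc]
        rw [lintegral_const_mul' _ _ ENNReal.ofReal_ne_top, ← mul_assoc, pow_succ,
          ENNReal.ofReal_mul (by positivity)]

lemma lintegral_comp_inner_norm_congr [InnerProductSpace ℝ E] [FiniteDimensional ℝ E]
    {G : ℝ → ℝ → ENNReal} (hG : Measurable (Function.uncurry G)) {u v : E} (huv : ‖u‖ = ‖v‖) :
    ∫⁻ x, G ⟪u, x⟫ ‖x‖ = ∫⁻ x, G ⟪v, x⟫ ‖x‖ := by
  set R := Submodule.reflection (ℝ ∙ (u - v))ᗮ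
  have hR : R u = v := Submodule.reflection_sub huv
  have hmeas : Measurable fun x => G ⟪v, x⟫ ‖x‖ :=
    hG.comp (f := fun x : E => (⟪v, x⟫, ‖x‖)) (by fun_prop)
  rw [← R.measurePreserving.lintegral_comp hmeas]
  simp only [R.norm_map, ← hR, R.inner_map_map]

end Polar

section SphereMarginal

lemma lintegral_comp_div_hypot_mul_comp_hypot (f w : ℝ → ENNReal) {c : ℝ} (hc : 0 < c) :
    ∫⁻ s : ℝ, f (s / √(s ^ 2 + c ^ 2)) * w √(s ^ 2 + c ^ 2) =
      ∫⁻ s : ℝ, f (Real.sin (Real.arctan s)) *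
        (ENNReal.ofReal c * w (c / Real.cos (Real.arctan s))) := by
  have dilate := lintegral_comp_smul_addHaar volume
    (fun s : ℝ => f (s / √(s ^ 2 + c ^ 2)) * w √(s ^ 2 + c ^ 2)) hc.ne'
  have hypot (s : ℝ) : √((c * s) ^ 2 + c ^ 2) = c * √(1 + s ^ 2) := by
    rw [show (c * s) ^ 2 + c ^ 2 = c ^ 2 * (1 + s ^ 2) by ring, Real.sqrt_mul (sq_nonneg c),
      Real.sqrt_sq hc.le]
  simp only [smul_eq_mul, hypot, mul_div_mul_left _ _ hc.ne', Module.finrank_self, pow_one,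
    abs_of_pos (inv_pos.2 hc)] at dilate
  simp only [Real.sin_arctan, Real.cos_arctan, div_div_eq_mul_div, div_one,
    mul_left_comm _ (ENNReal.ofReal c)]
  rw [lintegral_const_mul' _ _ ENNReal.ofReal_ne_top, dilate, ← mul_assoc,
    ← ENNReal.ofReal_mul hc.le, mul_inv_cancel₀ hc.ne', ENNReal.ofReal_one, one_mul]

lemma lintegral_comp_coord_zero_norm {m : ℕ} {G : ℝ → ℝ → ENNReal}
    (hG : Measurable (Function.uncurry G)) :
    ∫⁻ x : EuclideanSpace ℝ (Fin (m + 1)), G (x 0) ‖x‖ =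
      ∫⁻ y : EuclideanSpace ℝ (Fin m), ∫⁻ s : ℝ, G s √(s ^ 2 + ‖y‖ ^ 2) := by
  have e := ((PiLp.volume_preserving_toLp (Fin (m + 1))).comp
    (volume_preserving_piFinSuccAbove (fun _ : Fin (m + 1) => ℝ) 0).symm).comp
      ((MeasurePreserving.id volume).prod (PiLp.volume_preserving_ofLp (Fin m)))
  have hmeas : Measurable fun x : EuclideanSpace ℝ (Fin (m + 1)) => G (x 0) ‖x‖ :=
    hG.comp (f := fun x : EuclideanSpace ℝ (Fin (m + 1)) => (x 0, ‖x‖)) (by fun_prop)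
  rw [← e.lintegral_comp hmeas]
  refine (lintegral_prod_symm _ (hmeas.comp e.measurable).aemeasurable).trans ?_
  refine lintegral_congr fun y => lintegral_congr fun s => ?_
  simp [EuclideanSpace.norm_eq, Fin.sum_univ_succ, MeasurableEquiv.piFinSuccAbove,
    Fin.insertNthEquiv, Real.sq_sqrt (Finset.sum_nonneg fun _ _ => sq_nonneg _)]

lemma lintegral_comp_cosine_mul_comp_norm {m : ℕ} [NeZero m] {f w : ℝ → ENNReal}
    (hf : Measurable f) (hw : Measurable w) :
    ∫⁻ x : EuclideanSpace ℝ (Fin (m + 1)), f (x 0 / ‖x‖) * w ‖x‖ =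
      (∫⁻ y : EuclideanSpace ℝ (Fin m), ENNReal.ofReal ‖y‖ * w ‖y‖) *
        ∫⁻ s : ℝ, f (Real.sin (Real.arctan s)) *
          ENNReal.ofReal (Real.cos (Real.arctan s) ^ (m + 1)) := by
  have fiber : ∀ᵐ y : EuclideanSpace ℝ (Fin m),
      ∫⁻ s : ℝ, f (s / √(s ^ 2 + ‖y‖ ^ 2)) * w √(s ^ 2 + ‖y‖ ^ 2) =
        ∫⁻ s : ℝ, f (Real.sin (Real.arctan s)) *
          (ENNReal.ofReal ‖y‖ * w (‖y‖ / Real.cos (Real.arctan s))) := by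
    filter_upwards [Measure.ae_ne volume 0] with y hy
    exact lintegral_comp_div_hypot_mul_comp_hypot f w (norm_pos_iff.2 hy)
  rw [lintegral_comp_coord_zero_norm (G := fun a b => f (a / b) * w b)
      (by unfold Function.uncurry; fun_prop),
    lintegral_congr_ae fiber, lintegral_lintegral_swap (by fun_prop),
    ← lintegral_const_mul _ (by fun_prop)]
  refine lintegral_congr fun s => ?_
  rw [lintegral_const_mul _ (by fun_prop),
    lintegral_norm_mul_comp_norm_div volume w (Real.cos_arctan_pos s), finrank_euclideanSpace_fin]
  ring

lemma lintegral_inner_toSphere_mul {m : ℕ} [NeZero m] {f w : ℝ → ENNReal}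
    (hf : Measurable f) (hw : Measurable w) (η : EuclideanSpace ℝ (Fin (m + 1))) :
    (∫⁻ θ : sphere (0 : EuclideanSpace ℝ (Fin (m + 1))) 1, f ⟪η, θ⟫ ∂volume.toSphere) *
        ∫⁻ s : Ioi (0 : ℝ), w s ∂Measure.volumeIoiPow m =
      (∫⁻ y : EuclideanSpace ℝ (Fin m), ENNReal.ofReal ‖y‖ * w ‖y‖) *
        ∫⁻ s : ℝ, f (‖η‖ * Real.sin (Real.arctan s)) *
          ENNReal.ofReal (Real.cos (Real.arctan s) ^ (m + 1)) := by
  have polar := lintegral_comp_direction_mul_comp_norm volume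
    (f := fun x : EuclideanSpace ℝ (Fin (m + 1)) => f ⟪η, x⟫) (by fun_prop) hw
  have rotate := lintegral_comp_inner_norm_congr (G := fun a b => f (b⁻¹ * a) * w b)
    (by unfold Function.uncurry; fun_prop) (u := η) (v := EuclideanSpace.single 0 ‖η‖) (by simp)
  simp only [inner_smul_right, finrank_euclideanSpace_fin, add_tsub_cancel_right] at polar
  rw [← polar, rotate, ← lintegral_comp_cosine_mul_comp_norm (f := fun x => f (‖η‖ * x))
    (by fun_prop) hw]
  refine lintegral_congr fun x => ?_
  rw [EuclideanSpace.inner_single_left, conj_trivial, inv_mul_eq_div, mul_div_assoc]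

instance isProbabilityMeasure_uniformSphere (n : ℕ) [NeZero n] :
    IsProbabilityMeasure (uniformSphere n) :=
  ⟨ENNReal.inv_mul_cancel (Measure.measure_univ_ne_zero.2 (Measure.toSphere_ne_zero _))
    (measure_ne_top _ _)⟩

lemma inv_mul_mul_eq_of_mul_eq_mul {S A W J X Y : ENNReal} (hS : S ≠ 0) (hS' : S ≠ ⊤)
    (hW : W ≠ 0) (hW' : W ≠ ⊤) (hA : A * W = J * X) (hSW : S * W = J * Y) :
    S⁻¹ * A * Y = X := by
  have hJY : J * Y ≠ 0 := hSW ▸ mul_ne_zero hS hW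
  have hJ' : J ≠ ⊤ := fun h => ENNReal.mul_ne_top hS' hW' <| by
    rw [hSW, h, ENNReal.top_mul (right_ne_zero_of_mul hJY)]
  refine (ENNReal.mul_right_inj (left_ne_zero_of_mul hJY) hJ').1 ?_
  calc J * (S⁻¹ * A * Y) = S⁻¹ * A * (J * Y) := by ring
    _ = S * S⁻¹ * (A * W) := by rw [← hSW]; ring
    _ = J * X := by rw [ENNReal.mul_inv_cancel hS hS', one_mul, hA]

lemma lintegral_inner_uniformSphere_mul {n : ℕ} (hn : 2 ≤ n) {f : ℝ → ENNReal}
    (hf : Measurable f) (η : EuclideanSpace ℝ (Fin n)) :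
    (∫⁻ θ, f ⟪η, θ⟫ ∂uniformSphere n) *
        ∫⁻ s : ℝ, ENNReal.ofReal (Real.cos (Real.arctan s) ^ n) =
      ∫⁻ s : ℝ, f (‖η‖ * Real.sin (Real.arctan s)) *
        ENNReal.ofReal (Real.cos (Real.arctan s) ^ n) := by
  obtain ⟨m, rfl⟩ : ∃ m, n = m + 1 := ⟨n - 1, by omega⟩
  have : NeZero m := ⟨by omega⟩
  let w : ℝ → ENNReal := (Iio 1).indicator 1
  have hw : Measurable w := measurable_one.indicator measurableSet_Iio
  have polar_one := lintegral_inner_toSphere_mul (f := 1) measurable_one hw η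
  simp only [Pi.one_apply, lintegral_one, one_mul] at polar_one
  have radial : ∫⁻ s : Ioi (0 : ℝ), w s ∂Measure.volumeIoiPow m =
      ENNReal.ofReal (1 / (m + 1)) := by
    have := Measure.volumeIoiPow_apply_Iio m ⟨1, mem_Ioi.2 one_pos⟩
    rw [one_pow] at this
    rw [← this, ← lintegral_indicator_one measurableSet_Iio]
    rfl
  rw [uniformSphere, lintegral_smul_measure, smul_eq_mul]
  refine inv_mul_mul_eq_of_mul_eq_mul (Measure.measure_univ_ne_zero.2
    (Measure.toSphere_ne_zero _)) (measure_ne_top _ _) ?_ ?_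
    (lintegral_inner_toSphere_mul hf hw η) polar_one
  · rw [radial]
    exact (ENNReal.ofReal_pos.2 (by positivity)).ne'
  · rw [radial]
    exact ENNReal.ofReal_ne_top

end SphereMarginal

section GaussianDomination

lemma exp_neg_sq_div_two_le_cos_arctan (s : ℝ) :
    Real.exp (-s ^ 2 / 2) ≤ Real.cos (Real.arctan s) := by
  refine (pow_le_pow_iff_left₀ (Real.exp_pos _).le (Real.cos_arctan_pos s).le two_ne_zero).1 ?_
  rw [Real.cos_sq_arctan, ← Real.exp_nat_mul, one_div,
    show ((2 : ℕ) : ℝ) * (-s ^ 2 / 2) = -s ^ 2 by push_cast; ring, Real.exp_neg]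
  exact inv_anti₀ (by positivity) (by linarith [Real.add_one_le_exp (s ^ 2)])

lemma cos_le_exp_neg_sin_sq_div_two (x : ℝ) :
    Real.cos x ≤ Real.exp (-Real.sin x ^ 2 / 2) := by
  refine le_of_sq_le_sq ?_ (Real.exp_pos _).le
  rw [Real.cos_sq', ← Real.exp_nat_mul,
    show ((2 : ℕ) : ℝ) * (-Real.sin x ^ 2 / 2) = -Real.sin x ^ 2 by push_cast; ring]
  exact Real.one_sub_le_exp_neg _

lemma ofReal_sqrt_le_lintegral_cos_arctan_pow {n : ℕ} (hn : 0 < n) :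
    ENNReal.ofReal √(2 * Real.pi / n) ≤
      ∫⁻ s : ℝ, ENNReal.ofReal (Real.cos (Real.arctan s) ^ n) := by
  have : (0 : ℝ) < n := Nat.cast_pos.2 hn
  rw [show 2 * Real.pi / n = Real.pi / (n / 2) by field_simp, ← integral_gaussian,
    ofReal_integral_eq_lintegral_ofReal (integrable_exp_neg_mul_sq (by positivity))
      (ae_of_all _ fun x => (Real.exp_pos _).le)]
  refine lintegral_mono fun s => ENNReal.ofReal_le_ofReal ?_
  calc Real.exp (-(n / 2) * s ^ 2) = Real.exp (-s ^ 2 / 2) ^ n := by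
        rw [← Real.exp_nat_mul]; ring_nf
    _ ≤ Real.cos (Real.arctan s) ^ n := by gcongr; exact exp_neg_sq_div_two_le_cos_arctan s

lemma hasDerivAt_sin_arctan (s : ℝ) :
    HasDerivAt (fun s => Real.sin (Real.arctan s)) (Real.cos (Real.arctan s) ^ 3) s := by
  convert (Real.hasDerivAt_arctan s).sin using 1
  rw [← Real.cos_sq_arctan]
  ring

lemma sin_arctan_injective : Function.Injective fun s => Real.sin (Real.arctan s) :=
  fun s t h => Real.arctan_injective <| Real.injOn_sin
    (Ioo_subset_Icc_self (Real.arctan_mem_Ioo s)) (Ioo_subset_Icc_self (Real.arctan_mem_Ioo t)) h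

lemma lintegral_comp_sin_arctan_mul_cos_arctan_pow_le (f : ℝ → ENNReal) (k : ℕ) :
    ∫⁻ s : ℝ, f (Real.sin (Real.arctan s)) *
        ENNReal.ofReal (Real.cos (Real.arctan s) ^ (k + 3)) ≤
      ∫⁻ x : ℝ, f x * ENNReal.ofReal (Real.exp (-k * x ^ 2 / 2)) := by
  have cos_pow_le (s : ℝ) : Real.cos (Real.arctan s) ^ k ≤
      Real.exp (-k * Real.sin (Real.arctan s) ^ 2 / 2) :=
    calc Real.cos (Real.arctan s) ^ k ≤ Real.exp (-Real.sin (Real.arctan s) ^ 2 / 2) ^ k :=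
          pow_le_pow_left₀ (Real.cos_arctan_pos s).le (cos_le_exp_neg_sin_sq_div_two _) k
      _ = Real.exp (-k * Real.sin (Real.arctan s) ^ 2 / 2) := by
          rw [← Real.exp_nat_mul]; ring_nf
  calc ∫⁻ s : ℝ, f (Real.sin (Real.arctan s)) *
        ENNReal.ofReal (Real.cos (Real.arctan s) ^ (k + 3))
      ≤ ∫⁻ s : ℝ, ENNReal.ofReal |Real.cos (Real.arctan s) ^ 3| *
          (f (Real.sin (Real.arctan s)) *
            ENNReal.ofReal (Real.exp (-k * Real.sin (Real.arctan s) ^ 2 / 2))) := by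
        refine lintegral_mono fun s => ?_
        have cos_pos := Real.cos_arctan_pos s
        rw [abs_of_pos (pow_pos cos_pos 3), mul_left_comm, ← ENNReal.ofReal_mul (by positivity),
          pow_add, mul_comm (_ ^ k)]
        gcongr
        exact cos_pow_le s
    _ = ∫⁻ x in (fun s => Real.sin (Real.arctan s)) '' univ,
          f x * ENNReal.ofReal (Real.exp (-k * x ^ 2 / 2)) := by
        rw [lintegral_image_eq_lintegral_abs_deriv_mul MeasurableSet.univ
          (fun s _ => (hasDerivAt_sin_arctan s).hasDerivWithinAt) sin_arctan_injective.injOn,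
          Measure.restrict_univ]
    _ ≤ ∫⁻ x : ℝ, f x * ENNReal.ofReal (Real.exp (-k * x ^ 2 / 2)) := setLIntegral_le_lintegral _ _

lemma ofReal_sqrt_mul_lintegral_inner_uniformSphere_le {n : ℕ} (hn : 3 ≤ n) {f : ℝ → ENNReal}
    (hf : Measurable f) (η : EuclideanSpace ℝ (Fin n)) :
    ENNReal.ofReal √(2 * Real.pi / n) * ∫⁻ θ, f ⟪η, θ⟫ ∂uniformSphere n ≤
      ∫⁻ x : ℝ, f (‖η‖ * x) * ENNReal.ofReal (Real.exp (-(n - 3) * x ^ 2 / 2)) := by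
  obtain ⟨k, rfl⟩ : ∃ k, n = k + 3 := ⟨n - 3, by omega⟩
  calc ENNReal.ofReal √(2 * Real.pi / (k + 3 : ℕ)) * ∫⁻ θ, f ⟪η, θ⟫ ∂uniformSphere (k + 3)
      ≤ (∫⁻ θ, f ⟪η, θ⟫ ∂uniformSphere (k + 3)) *
          ∫⁻ s : ℝ, ENNReal.ofReal (Real.cos (Real.arctan s) ^ (k + 3)) := by
        rw [mul_comm]
        gcongr
        exact ofReal_sqrt_le_lintegral_cos_arctan_pow (by omega)
    _ ≤ _ := by
        rw [lintegral_inner_uniformSphere_mul (by omega) hf η]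
        convert lintegral_comp_sin_arctan_mul_cos_arctan_pow_le (fun x => f (‖η‖ * x)) k using 6
        push_cast
        ring

end GaussianDomination

section GaussianKernel

lemma continuous_gphi : Continuous gphi := by unfold gphi; fun_prop

lemma gphi_nonneg (x : ℝ) : 0 ≤ gphi x := (Real.exp_pos _).le

lemma gphi_le_one (x : ℝ) : gphi x ≤ 1 :=
  Real.exp_le_one_iff.2 (by linarith [sq_nonneg x])

lemma abs_mul_gphi_le_one (x : ℝ) : |x| * gphi x ≤ 1 := by
  have abs_le_exp : |x| ≤ Real.exp (x ^ 2 / 2) := by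
    nlinarith [sq_nonneg (|x| - 1), sq_abs x, Real.add_one_le_exp (x ^ 2 / 2)]
  rw [gphi, neg_div, Real.exp_neg, ← div_eq_mul_inv]
  exact div_le_one_of_le₀ abs_le_exp (Real.exp_pos _).le

lemma hasDerivAt_gphi (x : ℝ) : HasDerivAt gphi (-x * gphi x) x := by
  have exponent : HasDerivAt (fun y : ℝ => -y ^ 2 / 2) (-x) x :=
    ((hasDerivAt_pow 2 x).neg.div_const 2).congr_deriv (by ring)
  exact exponent.exp.congr_deriv (mul_comm _ _)

lemma lipschitzWith_gphi : LipschitzWith 1 gphi := by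
  refine lipschitzWith_of_nnnorm_deriv_le (fun x => (hasDerivAt_gphi x).differentiableAt)
    fun x => ?_
  rw [← NNReal.coe_le_coe, coe_nnnorm, (hasDerivAt_gphi x).deriv, Real.norm_eq_abs, abs_mul,
    abs_neg, abs_of_nonneg (gphi_nonneg x)]
  exact abs_mul_gphi_le_one x

lemma gphi_add_le (x t t' : ℝ) : gphi (x + t) ≤ gphi (x + t') + |t - t'| := by
  simpa [Real.dist_eq] using lipschitzWith_gphi.le_add_mul (x + t) (x + t')

lemma lintegral_gphi_mul_exp {a k : ℝ} (h : 0 < a ^ 2 + k) (t : ℝ) :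
    ∫⁻ x : ℝ, ENNReal.ofReal (gphi (a * x + t)) * ENNReal.ofReal (Real.exp (-k * x ^ 2 / 2)) =
      ENNReal.ofReal (√(2 * Real.pi / (a ^ 2 + k)) *
        Real.exp (-(t ^ 2 * k / (2 * (a ^ 2 + k))))) := by
  have complete_square (x : ℝ) :
      gphi (a * (-(a * t / (a ^ 2 + k)) + x) + t) *
          Real.exp (-k * (-(a * t / (a ^ 2 + k)) + x) ^ 2 / 2) =
        Real.exp (-(t ^ 2 * k / (2 * (a ^ 2 + k)))) * Real.exp (-((a ^ 2 + k) / 2) * x ^ 2) := by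
    rw [gphi, ← Real.exp_add, ← Real.exp_add]
    congr 1
    field_simp
    ring
  rw [← lintegral_add_left_eq_self _ (-(a * t / (a ^ 2 + k)))]
  simp only [← ENNReal.ofReal_mul (gphi_nonneg _), complete_square,
    ENNReal.ofReal_mul (Real.exp_pos _).le]
  rw [lintegral_const_mul _ (by fun_prop), ← ofReal_integral_eq_lintegral_ofReal
    (integrable_exp_neg_mul_sq (by positivity)) (ae_of_all _ fun x => (Real.exp_pos _).le),
    integral_gaussian, ← ENNReal.ofReal_mul (Real.exp_pos _).le, mul_comm,
    show Real.pi / ((a ^ 2 + k) / 2) = 2 * Real.pi / (a ^ 2 + k) by field_simp]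

end GaussianKernel

/-- The expectation of `Ffun r t θ η` over `θ` with independent uniform components: the value of
`F(η,t)` when the empirical average over the `θ_k` is replaced by the uniform measure. -/
noncomputable def meanFfun {n : ℕ} (r t : ℝ) (η : EuclideanSpace ℝ (Fin n)) : ℝ :=
  ∫ θ, gphi (r * ⟪η, θ⟫ + t) ∂uniformSphere n

section Mean

variable {n : ℕ} (r t t' : ℝ) (η : EuclideanSpace ℝ (Fin n))

lemma continuous_gphi_inner :
    Continuous fun θ : sphere (0 : EuclideanSpace ℝ (Fin n)) 1 => gphi (r * ⟪η, θ⟫ + t) :=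
  continuous_gphi.comp (by fun_prop)

lemma integrable_gphi_inner [NeZero n] :
    Integrable (fun θ : sphere (0 : EuclideanSpace ℝ (Fin n)) 1 => gphi (r * ⟪η, θ⟫ + t))
      (uniformSphere n) :=
  .of_bound (continuous_gphi_inner r t η).aestronglyMeasurable 1 <| ae_of_all _ fun _ => by
    rw [Real.norm_of_nonneg (gphi_nonneg _)]
    exact gphi_le_one _

lemma meanFfun_nonneg : 0 ≤ meanFfun r t η := integral_nonneg fun _ => gphi_nonneg _

lemma meanFfun_le_add_abs_sub [NeZero n] : meanFfun r t η ≤ meanFfun r t' η + |t - t'| := by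
  calc meanFfun r t η
      ≤ ∫ θ, (gphi (r * ⟪η, (θ : EuclideanSpace ℝ (Fin n))⟫ + t') + |t - t'|) ∂uniformSphere n :=
        integral_mono (integrable_gphi_inner r t η)
          ((integrable_gphi_inner r t' η).add (integrable_const _)) fun θ => gphi_add_le _ t t'
    _ = meanFfun r t' η + |t - t'| := by
        rw [integral_add (integrable_gphi_inner r t' η) (integrable_const _), integral_const,
          probReal_univ, one_smul, meanFfun]

variable {r} {η}

lemma meanFfun_le (hn : 3 ≤ n) (h : 0 < (r * ‖η‖) ^ 2 + (n - 3)) :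
    meanFfun r t η ≤ √(n / ((r * ‖η‖) ^ 2 + (n - 3))) *
      Real.exp (-(t ^ 2 * (n - 3) / (2 * ((r * ‖η‖) ^ 2 + (n - 3))))) := by
  have : (0 : ℝ) < n := Nat.cast_pos.2 (by omega)
  have hf : Measurable fun x : ℝ => ENNReal.ofReal (gphi (r * x + t)) :=
    (continuous_gphi.comp (by fun_prop)).measurable.ennreal_ofReal
  have upper := ofReal_sqrt_mul_lintegral_inner_uniformSphere_le hn hf η
  simp only [← mul_assoc r] at upper
  rw [lintegral_gphi_mul_exp h] at upper
  rw [meanFfun, integral_eq_lintegral_of_nonneg_ae (ae_of_all _ fun _ => gphi_nonneg _)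
    (continuous_gphi_inner r t η).aestronglyMeasurable]
  refine ENNReal.toReal_le_of_le_ofReal (by positivity) ?_
  have normalizer_pos : 0 < √(2 * Real.pi / n) := by positivity
  refine (ENNReal.mul_le_mul_iff_right (ENNReal.ofReal_pos.2 normalizer_pos).ne'
    ENNReal.ofReal_ne_top).1 (upper.trans_eq ?_)
  rw [← ENNReal.ofReal_mul normalizer_pos.le, ← mul_assoc, ← Real.sqrt_mul (by positivity)]
  congr 4
  field_simp

lemma meanFfun_le_of_le_norm_le (hn : 3 ≤ n) (hr : 0 < r) {l u : ℝ} (hl : 0 < l)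
    (hlη : l ≤ ‖η‖) (hηu : ‖η‖ ≤ u) :
    meanFfun r t η ≤ l⁻¹ * (√n / r) * gphi (√((n - 3) / ((r * u) ^ 2 + (n - 3))) * t) := by
  have hn0 : (0 : ℝ) ≤ n - 3 := sub_nonneg.2 (by exact_mod_cast hn)
  have hη : 0 < ‖η‖ := hl.trans_le hlη
  have prefactor : √(n / ((r * ‖η‖) ^ 2 + (n - 3))) ≤ l⁻¹ * (√n / r) :=
    calc √(n / ((r * ‖η‖) ^ 2 + (n - 3))) ≤ √(n / (r * l) ^ 2) := by
          gcongr
          exact (by gcongr : (r * l) ^ 2 ≤ (r * ‖η‖) ^ 2).trans (le_add_of_nonneg_right hn0)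
      _ = l⁻¹ * (√n / r) := by
          rw [Real.sqrt_div n.cast_nonneg, Real.sqrt_sq (by positivity)]
          field_simp
  have exponent : Real.exp (-(t ^ 2 * (n - 3) / (2 * ((r * ‖η‖) ^ 2 + (n - 3))))) ≤
      gphi (√((n - 3) / ((r * u) ^ 2 + (n - 3))) * t) := by
    rw [gphi, mul_pow √_, Real.sq_sqrt (by positivity), neg_div,
      show (n - 3) / ((r * u) ^ 2 + (n - 3)) * t ^ 2 / 2 =
        t ^ 2 * (n - 3) / (2 * ((r * u) ^ 2 + (n - 3))) by
          rw [div_mul_eq_mul_div, div_div, mul_comm (t ^ 2), mul_comm (2 : ℝ)]]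
    gcongr
  exact (meanFfun_le t hn (by positivity)).trans
    (mul_le_mul prefactor exponent (Real.exp_pos _).le (by positivity))

end Mean

section Concentration

open ProbabilityTheory

lemma measureReal_integral_add_le_average_le {ι Ω : Type*} [Fintype ι] [Nonempty ι]
    [MeasurableSpace Ω] (μ : Measure Ω) [IsProbabilityMeasure μ] {g : Ω → ℝ} {a b u : ℝ}
    (hg : AEMeasurable g μ) (hab : ∀ᵐ x ∂μ, g x ∈ Icc a b) (hu : 0 ≤ u) :
    (Measure.pi fun _ : ι => μ).real
        {ω | μ[g] + u ≤ (1 / Fintype.card ι : ℝ) * ∑ i, g (ω i)} ≤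
      Real.exp (-(2 * Fintype.card ι * u ^ 2 / (b - a) ^ 2)) := by
  have card_pos : (0 : ℝ) < Fintype.card ι := Nat.cast_pos.2 Fintype.card_pos
  have indep : iIndepFun (fun (i : ι) (ω : ι → Ω) => g (ω i) - μ[g]) (Measure.pi fun _ => μ) :=
    iIndepFun_pi (X := fun _ x => g x - μ[g]) fun _ => hg.sub_const _
  have subgaussian (i : ι) : HasSubgaussianMGF (fun ω : ι → Ω => g (ω i) - μ[g])
      ((‖b - a‖₊ / 2) ^ 2) (Measure.pi fun _ => μ) := by
    have eval_preserves := measurePreserving_eval (fun _ : ι => μ) i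
    refine .of_map (X := fun x => g x - μ[g]) eval_preserves.aemeasurable ?_
    rw [eval_preserves.map_eq]
    exact hasSubgaussianMGF_of_mem_Icc hg hab
  have hoeffding := HasSubgaussianMGF.measure_sum_ge_le_of_iIndepFun indep
    (s := Finset.univ) (fun i _ => subgaussian i) (ε := Fintype.card ι * u) (by positivity)
  convert hoeffding using 2
  · congr! 2 with ω
    rw [Finset.sum_sub_distrib, Finset.sum_const, Finset.card_univ, nsmul_eq_mul, one_div,
      inv_mul_eq_div, le_div_iff₀' card_pos, le_sub_iff_add_le', mul_add]
  · simp only [Finset.sum_const, Finset.card_univ, nsmul_eq_mul, NNReal.coe_mul,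
      NNReal.coe_natCast, NNReal.coe_pow, NNReal.coe_div, coe_nnnorm, NNReal.coe_ofNat, div_pow,
      Real.norm_eq_abs, sq_abs]
    field_simp

lemma ofReal_one_sub_card_mul_le_measure_forall_notMem {ι Ω : Type*} [MeasurableSpace Ω]
    (μ : Measure Ω) [IsProbabilityMeasure μ] {s : Finset ι} {A : ι → Set Ω} {p : ℝ}
    (h : ∀ i ∈ s, μ.real (A i) ≤ p) :
    ENNReal.ofReal (1 - s.card * p) ≤ μ {ω | ∀ i ∈ s, ω ∉ A i} := by
  have union_le : μ.real (⋃ i ∈ s, A i) ≤ s.card * p := by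
    rw [← nsmul_eq_mul]
    exact (measureReal_biUnion_finset_le s A).trans (Finset.sum_le_card_nsmul s _ p h)
  have cover : (1 : ℝ) ≤ μ.real (⋃ i ∈ s, A i) + μ.real (⋃ i ∈ s, A i)ᶜ := by
    rw [← probReal_univ (μ := μ), ← union_compl_self (⋃ i ∈ s, A i)]
    exact measureReal_union_le _ _
  rw [show {ω | ∀ i ∈ s, ω ∉ A i} = (⋃ i ∈ s, A i)ᶜ by ext; simp, ← ofReal_measureReal]
  exact ENNReal.ofReal_le_ofReal (by linarith)

lemma exists_finset_forall_abs_sub_le {T δ : ℝ} (hT : 0 ≤ T) (hδ : 0 < δ) :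
    ∃ G : Finset ℝ, (G.card : ℝ) ≤ 2 * T / δ + 3 ∧ ∀ t, |t| ≤ T → ∃ s ∈ G, |t - s| ≤ δ := by
  set K : ℕ := ⌈T / δ⌉₊
  refine ⟨(Finset.Icc (-K : ℤ) K).image fun j : ℤ => (j : ℝ) * δ, ?_, fun t ht => ?_⟩
  · have card_le : ((Finset.Icc (-K : ℤ) K).image fun j : ℤ => (j : ℝ) * δ).card ≤ 2 * K + 1 :=
      Finset.card_image_le.trans (by rw [Int.card_Icc]; omega)
    calc _ ≤ 2 * (K : ℝ) + 1 := by exact_mod_cast card_le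
      _ ≤ 2 * (T / δ + 1) + 1 := by gcongr; exact (Nat.ceil_lt_add_one (by positivity)).le
      _ = 2 * T / δ + 3 := by ring
  · have abs_le_K : |t / δ| ≤ K := by
      rw [abs_div, abs_of_pos hδ]
      exact (by gcongr : |t| / δ ≤ T / δ).trans (Nat.le_ceil _)
    have floor_mem : ⌊t / δ⌋ ∈ Finset.Icc (-K : ℤ) K := by
      refine Finset.mem_Icc.2 ⟨Int.le_floor.2 ?_, ?_⟩
      · exact_mod_cast (abs_le.1 abs_le_K).1
      · exact_mod_cast (Int.floor_le _).trans (abs_le.1 abs_le_K).2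
    refine ⟨⌊t / δ⌋ * δ, Finset.mem_image_of_mem _ floor_mem, ?_⟩
    rw [show t - ⌊t / δ⌋ * δ = Int.fract (t / δ) * δ by rw [Int.fract]; field_simp, abs_mul,
      abs_of_pos hδ, Int.abs_fract]
    exact mul_le_of_le_one_left hδ.le (Int.fract_lt_one _).le

lemma average_le_average_add {N : ℕ} [NeZero N] {x y : Fin N → ℝ} {c : ℝ}
    (h : ∀ k, x k ≤ y k + c) :
    1 / (N : ℝ) * ∑ k, x k ≤ 1 / (N : ℝ) * ∑ k, y k + c :=
  calc 1 / (N : ℝ) * ∑ k, x k ≤ 1 / (N : ℝ) * ∑ k, (y k + c) := by gcongr; exact h _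
    _ = 1 / (N : ℝ) * ∑ k, y k + c := by
      rw [Finset.sum_add_distrib, Fin.sum_const, nsmul_eq_mul, mul_add, ← mul_assoc _ _ c,
        one_div_mul_cancel (NeZero.ne _), one_mul]

variable {n N : ℕ} [NeZero N] {r c : ℝ} (t t' : ℝ)
  (θ : Fin N → sphere (0 : EuclideanSpace ℝ (Fin n)) 1) {η : EuclideanSpace ℝ (Fin n)}

lemma Ffun_le_add_abs_sub (r : ℝ) (η : EuclideanSpace ℝ (Fin n)) :
    Ffun r t θ η ≤ Ffun r t' θ η + |t - t'| :=
  average_le_average_add fun _ => gphi_add_le _ t t'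

variable {t} in
lemma Ffun_le_inv_of_add_le_abs (hr : 0 ≤ r) (hc : 0 < c) (ht : r * ‖η‖ + c ≤ |t|) :
    Ffun r t θ η ≤ c⁻¹ := by
  have gphi_le (k : Fin N) :
      gphi (r * ⟪η, (θ k : EuclideanSpace ℝ (Fin n))⟫ + t) ≤ 0 + c⁻¹ := by
    have inner_le : |r * ⟪η, (θ k : EuclideanSpace ℝ (Fin n))⟫| ≤ r * ‖η‖ := by
      rw [abs_mul, abs_of_nonneg hr]
      gcongr
      simpa using abs_real_inner_le_norm η (θ k : EuclideanSpace ℝ (Fin n))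
    set x := r * ⟪η, (θ k : EuclideanSpace ℝ (Fin n))⟫
    have c_le : c ≤ |x + t| := by
      have := abs_sub_abs_le_abs_sub t (-x)
      rw [abs_neg, sub_neg_eq_add, add_comm t] at this
      linarith
    rw [zero_add, ← one_div, le_div_iff₀' hc]
    exact (by gcongr; exact gphi_nonneg _ : c * gphi (x + t) ≤ |x + t| * gphi (x + t)).trans
      (abs_mul_gphi_le_one _)
  simpa [Ffun] using average_le_average_add gphi_le

instance isProbabilityMeasure_sphereProduct (n N : ℕ) [NeZero n] :
    IsProbabilityMeasure (sphereProduct n N) := by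
  unfold sphereProduct
  infer_instance

lemma measureReal_meanFfun_add_le_Ffun_le [NeZero n] (r : ℝ) (η : EuclideanSpace ℝ (Fin n))
    {u : ℝ} (hu : 0 ≤ u) :
    (sphereProduct n N).real {θ | meanFfun r t η + u ≤ Ffun r t θ η} ≤
      Real.exp (-(2 * N * u ^ 2)) := by
  simpa [sphereProduct, meanFfun, Ffun] using measureReal_integral_add_le_average_le (ι := Fin N)
    (uniformSphere n) (continuous_gphi_inner r t η).measurable.aemeasurable
    (ae_of_all _ fun _ => ⟨gphi_nonneg _, gphi_le_one _⟩) hu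

lemma ofReal_le_sphereProduct_forall_Ffun_le [NeZero n] {S : Finset (EuclideanSpace ℝ (Fin n))}
    {R δ u : ℝ} (hr : 0 ≤ r) (hR : 0 ≤ R) (hδ : 0 < δ) (hu : 0 ≤ u) (hS : ∀ η ∈ S, ‖η‖ ≤ R) :
    ENNReal.ofReal
        (1 - S.card * (2 * (r * R + δ⁻¹) / δ + 3) * Real.exp (-(2 * N * u ^ 2))) ≤
      sphereProduct n N
        {θ | ∀ η ∈ S, ∀ t, Ffun r t θ η ≤ meanFfun r t η + u + 2 * δ} := by
  obtain ⟨G, card_G, hG⟩ :=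
    exists_finset_forall_abs_sub_le (by positivity : 0 ≤ r * R + δ⁻¹) hδ
  have on_grid := ofReal_one_sub_card_mul_le_measure_forall_notMem (sphereProduct n N)
    (s := S ×ˢ G) fun p _ => measureReal_meanFfun_add_le_Ffun_le p.2 r p.1 hu
  refine (ENNReal.ofReal_le_ofReal ?_).trans (on_grid.trans (measure_mono fun θ hθ η hη t => ?_))
  · rw [Finset.card_product, Nat.cast_mul]
    gcongr
  · have mean_nonneg := meanFfun_nonneg r t η
    rcases le_total |t| (r * R + δ⁻¹) with ht | ht
    · obtain ⟨s, hs, hts⟩ := hG t ht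
      have grid_lt : Ffun r s θ η < meanFfun r s η + u :=
        not_le.1 (hθ (η, s) (Finset.mk_mem_product hη hs))
      linarith [Ffun_le_add_abs_sub t s θ r η, meanFfun_le_add_abs_sub r s t η, abs_sub_comm s t]
    · have tail := Ffun_le_inv_of_add_le_abs θ hr (inv_pos.2 hδ) (η := η) (t := t)
        (le_trans (by gcongr; exact hS η hη) ht)
      rw [inv_inv] at tail
      linarith

end Concentration

section NetCount

lemma sum_exp_neg_mul_abs_le {a : ℝ} (ha : 0 < a) (s : Finset ℤ) :
    ∑ k ∈ s, Real.exp (-(a * |(k : ℝ)|)) ≤ 1 + 2 / a := by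
  set x := Real.exp (-a)
  have x_pos : 0 < x := Real.exp_pos _
  have x_lt : x < 1 := Real.exp_lt_one_iff.2 (neg_lt_zero.2 ha)
  have exp_eq_pow (j : ℕ) : Real.exp (-(a * j)) = x ^ j := by
    rw [← Real.exp_nat_mul]
    ring_nf
  have geometric := hasSum_geometric_of_lt_one x_pos.le x_lt
  have total : HasSum (fun k : ℤ => Real.exp (-(a * |(k : ℝ)|))) ((1 - x)⁻¹ + x * (1 - x)⁻¹) := by
    refine .of_nat_of_neg_add_one ?_ ?_
    · simpa [exp_eq_pow] using geometric
    · refine (geometric.mul_left x).congr_fun fun j => ?_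
      rw [← pow_succ', ← exp_eq_pow]
      push_cast
      rw [abs_neg, abs_of_nonneg (by positivity)]
  have x_mul_le : x * (1 + a) ≤ 1 :=
    calc x * (1 + a) ≤ x * Real.exp a := by gcongr; linarith [Real.add_one_le_exp a]
      _ = 1 := by rw [← Real.exp_add, neg_add_cancel, Real.exp_zero]
  calc ∑ k ∈ s, Real.exp (-(a * |(k : ℝ)|)) ≤ (1 - x)⁻¹ + x * (1 - x)⁻¹ :=
        sum_le_hasSum s (fun _ _ => (Real.exp_pos _).le) total
    _ = (1 + x) / (1 - x) := by ring
    _ ≤ 1 + 2 / a := by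
        rw [div_le_iff₀ (sub_pos.2 x_lt)]
        field_simp
        linarith

section IntegerSimplex

variable {ι : Type*} [Fintype ι] (B : ℝ)

lemma finite_setOf_sum_abs_le : {m : ι → ℤ | ∑ i, |(m i : ℝ)| ≤ B}.Finite := by
  classical
  refine (finite_Icc (fun _ => -(⌈B⌉₊ : ℤ)) fun _ => (⌈B⌉₊ : ℤ)).subset fun m hm => ?_
  have coord_le (i : ι) : |m i| ≤ (⌈B⌉₊ : ℤ) := by
    exact_mod_cast (Finset.single_le_sum (f := fun i => |(m i : ℝ)|) (fun _ _ => abs_nonneg _)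
      (Finset.mem_univ i)).trans (le_trans hm (Nat.le_ceil B))
  exact ⟨fun i => (abs_le.1 (coord_le i)).1, fun i => (abs_le.1 (coord_le i)).2⟩

/- Exponential Chebyshev: each point of the simplex contributes at least `1` to
`∑ exp (a * (B - ∑ i, |m i|))`, which factorizes over the coordinates. -/
lemma ncard_setOf_sum_abs_le {a : ℝ} (ha : 0 < a) :
    ({m : ι → ℤ | ∑ i, |(m i : ℝ)| ≤ B}.ncard : ℝ) ≤
      Real.exp (a * B) * (1 + 2 / a) ^ Fintype.card ι := by
  classical
  have finite := finite_setOf_sum_abs_le (ι := ι) B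
  set M := finite.toFinset
  let P : ι → Finset ℤ := fun i => M.image fun m => m i
  have M_subset : M ⊆ Fintype.piFinset P := fun _ hm =>
    Fintype.mem_piFinset.2 fun i => Finset.mem_image_of_mem (fun m => m i) hm
  calc ({m : ι → ℤ | ∑ i, |(m i : ℝ)| ≤ B}.ncard : ℝ) = ∑ _m ∈ M, (1 : ℝ) := by
        rw [ncard_eq_toFinset_card _ finite, Finset.sum_const, nsmul_one]
    _ ≤ ∑ m ∈ M, Real.exp (a * B) * ∏ i, Real.exp (-(a * |(m i : ℝ)|)) := by
        refine Finset.sum_le_sum fun m hm => ?_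
        rw [← Real.exp_sum, ← Real.exp_add, Finset.sum_neg_distrib, ← Finset.mul_sum]
        have sum_le : ∑ i, |(m i : ℝ)| ≤ B := finite.mem_toFinset.1 hm
        exact Real.one_le_exp (by rw [← sub_eq_add_neg, sub_nonneg]; gcongr)
    _ ≤ ∑ m ∈ Fintype.piFinset P, Real.exp (a * B) * ∏ i, Real.exp (-(a * |(m i : ℝ)|)) :=
        Finset.sum_le_sum_of_subset_of_nonneg M_subset fun _ _ _ => by positivity
    _ = Real.exp (a * B) * ∏ i, ∑ k ∈ P i, Real.exp (-(a * |(k : ℝ)|)) := by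
        rw [← Finset.mul_sum, Finset.prod_univ_sum]
    _ ≤ Real.exp (a * B) * ∏ _i : ι, (1 + 2 / a) := by
        gcongr
        exact sum_exp_neg_mul_abs_le ha _
    _ = Real.exp (a * B) * (1 + 2 / a) ^ Fintype.card ι := by
        rw [Finset.prod_const, Finset.card_univ]

end IntegerSimplex

variable {n : ℕ} {ρ : ℝ}

lemma sum_abs_le_sqrt_mul_norm (x : EuclideanSpace ℝ (Fin n)) : ∑ i, |x i| ≤ √n * ‖x‖ := by
  refine le_of_sq_le_sq ?_ (by positivity)
  rw [mul_pow, Real.sq_sqrt n.cast_nonneg, EuclideanSpace.real_norm_sq_eq]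
  simpa using sq_sum_le_card_mul_sum_sq (s := Finset.univ) (f := fun i => |x i|)

lemma Fnet_subset_image (hρ : 0 < ρ) :
    Fnet n ρ ⊆ (fun m : Fin n → ℤ => WithLp.toLp 2 fun i => ρ / √n * m i) ''
      {m | ∑ i, |(m i : ℝ)| ≤ (1 + ρ) * n / ρ} := by
  rintro η ⟨⟨hη, -⟩, hlattice⟩
  choose m hm using hlattice
  refine ⟨m, ?_, by ext i; exact (hm i).symm⟩
  rcases n.eq_zero_or_pos with rfl | hn
  · simp
  have sum_eq : ∑ i, |η i| = ρ / √n * ∑ i, |(m i : ℝ)| := by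
    rw [Finset.mul_sum]
    exact Finset.sum_congr rfl fun i _ => by rw [hm i, abs_mul, abs_of_nonneg (by positivity)]
  have scaled := (sum_abs_le_sqrt_mul_norm η).trans
    (mul_le_mul_of_nonneg_left (mem_closedBall_zero_iff.1 hη) (Real.sqrt_nonneg _))
  have sqrt_pos : 0 < √(n : ℝ) := Real.sqrt_pos.2 (Nat.cast_pos.2 hn)
  rw [sum_eq, div_mul_eq_mul_div, div_le_iff₀ sqrt_pos, mul_right_comm,
    Real.mul_self_sqrt n.cast_nonneg] at scaled
  rw [mem_ofPred_eq, le_div_iff₀' hρ, mul_comm (1 + ρ)]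
  exact scaled

lemma finite_Fnet (hρ : 0 < ρ) : (Fnet n ρ).Finite :=
  ((finite_setOf_sum_abs_le _).image _).subset (Fnet_subset_image hρ)

lemma ncard_Fnet_le (hρ : ρ ∈ Ioo (0 : ℝ) (1 / 2)) :
    ((Fnet n ρ).ncard : ℝ) ≤ Real.exp (3 * n + n * Real.log (1 / ρ)) := by
  obtain ⟨hρ0, hρ1⟩ := hρ
  have simplex_finite := finite_setOf_sum_abs_le (ι := Fin n) ((1 + ρ) * n / ρ)
  have ncard_le : (Fnet n ρ).ncard ≤ {m : Fin n → ℤ | ∑ i, |(m i : ℝ)| ≤ (1 + ρ) * n / ρ}.ncard :=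
    (ncard_le_ncard (Fnet_subset_image hρ0) (simplex_finite.image _)).trans
      (ncard_image_le simplex_finite)
  have base_le : 1 + 2 / ρ ≤ Real.exp (1 + Real.log (1 / ρ)) := by
    rw [Real.exp_add, Real.exp_log (by positivity), mul_one_div, le_div_iff₀ hρ0, add_mul,
      div_mul_cancel₀ _ hρ0.ne']
    linarith [Real.exp_one_gt_d9]
  calc ((Fnet n ρ).ncard : ℝ)
      ≤ {m : Fin n → ℤ | ∑ i, |(m i : ℝ)| ≤ (1 + ρ) * n / ρ}.ncard := by exact_mod_cast ncard_le
    _ ≤ Real.exp (ρ * ((1 + ρ) * n / ρ)) * (1 + 2 / ρ) ^ n := by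
        simpa using ncard_setOf_sum_abs_le (ι := Fin n) ((1 + ρ) * n / ρ) hρ0
    _ ≤ Real.exp (2 * n) * Real.exp (1 + Real.log (1 / ρ)) ^ n := by
        rw [mul_div_cancel₀ _ hρ0.ne']
        gcongr
        linarith
    _ = Real.exp (3 * n + n * Real.log (1 / ρ)) := by
        rw [← Real.exp_nat_mul, ← Real.exp_add]
        ring_nf

end NetCount

section UnionBound

lemma one_half_le_log_one_div {ρ : ℝ} (hρ : ρ ∈ Ioo (0 : ℝ) (1 / 2)) :
    1 / 2 ≤ Real.log (1 / ρ) :=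
  calc (1 / 2 : ℝ) ≤ Real.log 2 := by linarith [Real.log_two_gt_d9]
    _ ≤ Real.log (1 / ρ) := Real.log_le_log two_pos <|
      (le_one_div two_pos hρ.1).2 hρ.2.le

lemma grid_card_le {N : ℕ} {e ρ r : ℝ} (he : 1 ≤ e) (hρ : ρ ∈ Ioo (0 : ℝ) (1 / 2))
    (hN : (N : ℝ) ≤ e) (hr : r ≤ e) :
    2 * (r * (1 + ρ) + N) * N + 3 ≤ 9 * e ^ 2 :=
  calc 2 * (r * (1 + ρ) + N) * N + 3 ≤ 2 * (e * (1 + 1) + e) * e + 3 * e ^ 2 := by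
        gcongr
        · linarith [hρ.1]
        · linarith [hρ.2]
        · nlinarith
    _ = 9 * e ^ 2 := by ring

lemma net_mul_grid_card_mul_exp_le {n N : ℕ} [NeZero n] [NeZero N] {A ρ r s : ℝ} (hA : 0 ≤ A)
    (hρ : ρ ∈ Ioo (0 : ℝ) (1 / 2)) (hN : (N : ℝ) ≤ Real.exp (A * n)) (hr : 0 ≤ r)
    (hr' : r ≤ Real.exp (A * n)) (hs : s ≤ Real.exp (3 * n + n * Real.log (1 / ρ))) :
    s * (2 * (r * (1 + ρ) + N) * N + 3) *
        Real.exp (-(2 * N * ((A + 5) * √(n / N * Real.log (1 / ρ))) ^ 2)) ≤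
      Real.exp (-(5 * n)) := by
  have hn : (1 : ℝ) ≤ n := by exact_mod_cast NeZero.one_le
  have hNpos : (0 : ℝ) < N := Nat.cast_pos.2 (NeZero.pos N)
  have log_ge := one_half_le_log_one_div hρ
  set L := Real.log (1 / ρ)
  set e := Real.exp (A * n)
  have grid_le : 2 * (r * (1 + ρ) + N) * N + 3 ≤ Real.exp (8 * n) * e ^ 2 :=
    (grid_card_le (Real.one_le_exp (by positivity)) hρ hN hr').trans <| by
      gcongr
      linarith [Real.add_one_le_exp (8 * n : ℝ)]
  have deviation : 2 * N * ((A + 5) * √(n / N * L)) ^ 2 = 2 * (A + 5) ^ 2 * (n * L) := by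
    rw [mul_pow, Real.sq_sqrt (by positivity)]
    field_simp
  have exponent : 3 * n + n * L + (8 * n + 2 * (A * n)) + -(2 * (A + 5) ^ 2 * (n * L)) ≤
      -(5 * n) := by
    have : 16 + 2 * A ≤ (2 * (A + 5) ^ 2 - 1) * L :=
      calc 16 + 2 * A ≤ (2 * (A + 5) ^ 2 - 1) * (1 / 2) := by nlinarith
        _ ≤ (2 * (A + 5) ^ 2 - 1) * L := by gcongr; nlinarith
    nlinarith
  calc _ ≤ Real.exp (3 * n + n * L) * (Real.exp (8 * n) * e ^ 2) *
        Real.exp (-(2 * (A + 5) ^ 2 * (n * L))) := by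
        rw [deviation]
        gcongr
        have := hρ.1
        positivity
    _ = Real.exp (3 * n + n * L + (8 * n + 2 * (A * n)) + -(2 * (A + 5) ^ 2 * (n * L))) := by
        rw [← Real.exp_nat_mul, Nat.cast_two, ← Real.exp_add, ← Real.exp_add, ← Real.exp_add]
    _ ≤ Real.exp (-(5 * n)) := Real.exp_le_exp.2 exponent

lemma one_div_le_sqrt_mul_log {n N : ℕ} [NeZero N] {ρ : ℝ} (hn : 3 ≤ n)
    (hρ : ρ ∈ Ioo (0 : ℝ) (1 / 2)) : 1 / (N : ℝ) ≤ √(n / N * Real.log (1 / ρ)) := by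
  have hn' : (3 : ℝ) ≤ n := by exact_mod_cast hn
  have hN : (1 : ℝ) ≤ N := by exact_mod_cast NeZero.one_le
  refine Real.le_sqrt_of_sq_le ?_
  calc (1 / (N : ℝ)) ^ 2 ≤ 1 / N * 1 := by
        rw [sq]
        gcongr
        exact div_le_one_of_le₀ hN (by positivity)
    _ ≤ 1 / N * (n * Real.log (1 / ρ)) := by
        gcongr
        nlinarith [one_half_le_log_one_div hρ]
    _ = n / N * Real.log (1 / ρ) := by ring

theorem ofReal_le_sphereProduct_forall_Fnet_Ffun_le {n N : ℕ} [NeZero N] {A ρ r : ℝ} (hn : 3 ≤ n)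
    (hA : 0 ≤ A) (hρ : ρ ∈ Ioo (0 : ℝ) (1 / 2)) (hN : (N : ℝ) ≤ Real.exp (A * n)) (hr : 0 < r)
    (hr' : r ≤ Real.exp (A * n)) :
    ENNReal.ofReal (1 - Real.exp (-(5 * n))) ≤
      sphereProduct n N {θ | ∀ η ∈ Fnet n ρ, ∀ t : ℝ,
        Ffun r t θ η ≤ (A + 7) * √(n / N * Real.log (1 / ρ)) +
          (1 - 2 * ρ)⁻¹ * (√n / r) * gphi (√((n - 3) / ((r * (1 + ρ)) ^ 2 + (n - 3))) * t)} := by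
  have : NeZero n := ⟨by omega⟩
  have hNpos : (0 : ℝ) < N := Nat.cast_pos.2 (NeZero.pos N)
  have net_finite := finite_Fnet (n := n) hρ.1
  have card_net : (net_finite.toFinset.card : ℝ) ≤ Real.exp (3 * n + n * Real.log (1 / ρ)) := by
    rw [← ncard_eq_toFinset_card _ net_finite]
    exact ncard_Fnet_le hρ
  have concentration := ofReal_le_sphereProduct_forall_Ffun_le (N := N) (S := net_finite.toFinset)
    (u := (A + 5) * √(n / N * Real.log (1 / ρ))) hr.le (by linarith [hρ.1] : 0 ≤ 1 + ρ)
    (one_div_pos.2 hNpos) (by positivity)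
    fun η hη => mem_closedBall_zero_iff.1 (net_finite.mem_toFinset.1 hη).1.1
  rw [one_div, inv_inv, div_inv_eq_mul] at concentration
  refine (ENNReal.ofReal_le_ofReal (sub_le_sub_left
    (net_mul_grid_card_mul_exp_le hA hρ hN hr.le hr' card_net) 1)).trans
    (concentration.trans (measure_mono fun θ hθ η hη t => ?_))
  have deviation := hθ η (net_finite.mem_toFinset.2 hη) t
  have mean := meanFfun_le_of_le_norm_le t hn hr (by linarith [hρ.2] : 0 < 1 - 2 * ρ)
    (not_le.1 (mem_closedBall_zero_iff.not.1 hη.1.2)).le (mem_closedBall_zero_iff.1 hη.1.1)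
  have discretization := one_div_le_sqrt_mul_log (N := N) hn hρ
  rw [one_div] at discretization
  linarith

end UnionBound

section ParameterBounds

lemma one_sub_le_div_sqrt_mul_sqrt {n : ℕ} {ρ r : ℝ} (hn : 3 ≤ n) (hρ : ρ ∈ Icc (0 : ℝ) 1)
    (hr : 0 < r) (hrn : r ≤ n) :
    1 - 4 * (ρ + n / r ^ 2) ≤ r / √n * √((n - 3) / ((r * (1 + ρ)) ^ 2 + (n - 3))) := by
  obtain ⟨hρ0, hρ1⟩ := hρ
  have hn' : (3 : ℝ) ≤ n := by exact_mod_cast hn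
  have hn0 : (0 : ℝ) ≤ n - 3 := by linarith
  set z : ℝ := n / r ^ 2
  have one_div_le : 1 / (n : ℝ) ≤ z := by
    rw [div_le_div_iff₀ (by positivity) (by positivity)]
    nlinarith
  set D : ℝ := (1 + ρ) ^ 2 + (n - 3) / r ^ 2
  have one_le_D : 1 ≤ D := le_add_of_le_of_nonneg (one_le_pow₀ (by linarith)) (by positivity)
  have D_le : D ≤ 1 + (3 * ρ + z) := by
    have : (n - 3) / r ^ 2 ≤ z := div_le_div_of_nonneg_right (by linarith) (sq_nonneg r)
    nlinarith
  have D_inv_ge : 1 - (3 * ρ + z) ≤ D⁻¹ := by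
    nlinarith [mul_inv_cancel₀ (by positivity : D ≠ 0), inv_le_one_of_one_le₀ one_le_D]
  set Q : ℝ := (1 - 3 * (1 / n)) * D⁻¹
  have factor_nonneg : 0 ≤ 1 - 3 * (1 / (n : ℝ)) := by
    rw [mul_one_div, sub_nonneg]
    exact div_le_one_of_le₀ hn' (by positivity)
  have Q_nonneg : 0 ≤ Q := mul_nonneg factor_nonneg (by positivity)
  have Q_le_one : Q ≤ 1 := mul_le_one₀ (sub_le_self _ (by positivity))
    (by positivity) (inv_le_one_of_one_le₀ one_le_D)
  calc 1 - 4 * (ρ + z) ≤ (1 - 3 * (1 / n)) * (1 - (3 * ρ + z)) := by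
        have : 0 ≤ 1 / (n : ℝ) * (3 * ρ + z) := by positivity
        linarith
    _ ≤ Q := mul_le_mul_of_nonneg_left D_inv_ge factor_nonneg
    _ ≤ √Q := Real.le_sqrt_of_sq_le (by nlinarith)
    _ = √((r / √n) ^ 2 * ((n - 3) / ((r * (1 + ρ)) ^ 2 + (n - 3)))) := by
        congr 1
        simp only [Q, D]
        rw [div_pow, Real.sq_sqrt n.cast_nonneg]
        field_simp
    _ = r / √n * √((n - 3) / ((r * (1 + ρ)) ^ 2 + (n - 3))) := by
        rw [Real.sqrt_mul (by positivity), Real.sqrt_sq (by positivity)]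

lemma inv_one_sub_two_mul_le {ρ : ℝ} (hρ : ρ ∈ Icc (0 : ℝ) (1 / 3)) :
    (1 - 2 * ρ)⁻¹ ≤ 1 + 6 * ρ := by
  obtain ⟨hρ0, hρ1⟩ := hρ
  rw [inv_le_iff_one_le_mul₀ (by linarith)]
  nlinarith

lemma sq_le_of_mul_sqrt_le {c x : ℝ} (hc : 0 ≤ c) (hx : 0 < x) (h : c * √x ≤ x) : c ^ 2 ≤ x := by
  have c_le_sqrt : c ≤ √x := by
    rw [← Real.div_sqrt, le_div_iff₀ (Real.sqrt_pos.2 hx)]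
    exact h
  exact (Real.le_sqrt hc hx.le).1 c_le_sqrt

lemma natCast_pow_le_exp_mul (n k : ℕ) : (n : ℝ) ^ k ≤ Real.exp (k * n) := by
  rw [Real.exp_nat_mul]
  gcongr
  linarith [Real.add_one_le_exp (n : ℝ)]

end ParameterBounds

theorem Ffun_union_bound_on_net_general {A : ℝ} (hA : 1 ≤ A) :
    ∃ C₁ C₂ C' C₆ C₇ : ℝ, 0 < C₁ ∧ 0 < C₂ ∧ 0 < C' ∧ 0 < C₆ ∧ 0 < C₇ ∧
      ∀ n : ℕ, 0 < n → ∀ ρ : ℝ, ρ ∈ Set.Ioo (0 : ℝ) (1 / 3) →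
        ∀ N : ℕ, C₁ * n * Real.log (1 / ρ) ≤ N → (N : ℝ) ≤ Real.exp (A * n) →
          ∀ r : ℝ, C₂ * Real.sqrt n ≤ r → r ≤ n →
            ∃ q : ℝ, 1 - C' * (ρ + n / r ^ 2) ≤ q ∧
              ENNReal.ofReal (1 - Real.exp (-(5 * n))) ≤
                sphereProduct n N
                  {θ | ∀ η ∈ Fnet n ρ, ∀ t : ℝ,
                    Ffun r t θ η ≤
                      C₆ * Real.sqrt ((n / N) * Real.log (1 / ρ)) +
                        (1 + C₇ * (ρ + n / r ^ 2 + (Real.log n) ^ 2 / n + 1 / r)) *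
                          (Real.sqrt n / r) * gphi (q * Real.sqrt n * t / r)} := by
  refine ⟨1, 2, 4, A + 7, 6, one_pos, two_pos, four_pos, by linarith, by norm_num, ?_⟩
  rintro n hn ρ ⟨hρ0, hρ1⟩ N hN hN' r hr hrn
  have hn0 : (0 : ℝ) < n := Nat.cast_pos.2 hn
  have hr0 : 0 < r := (by positivity : 0 < 2 * √(n : ℝ)).trans_le hr
  have hn3 : 3 ≤ n := by
    have : (2 : ℝ) ^ 2 ≤ n := sq_le_of_mul_sqrt_le two_pos.le hn0 (hr.trans hrn)
    exact (by norm_num : 3 ≤ 2 ^ 2).trans (by exact_mod_cast this)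
  have hρ : ρ ∈ Ioo (0 : ℝ) (1 / 2) := ⟨hρ0, by linarith⟩
  have hNpos : (0 : ℝ) < N := lt_of_lt_of_le (by
    have := one_half_le_log_one_div hρ
    positivity) hN
  have : NeZero N := ⟨(Nat.cast_pos.1 hNpos).ne'⟩
  have hr' : r ≤ Real.exp (A * n) := by nlinarith [Real.add_one_le_exp (A * n)]
  refine ⟨_, one_sub_le_div_sqrt_mul_sqrt hn3 ⟨hρ0.le, by linarith⟩ hr0 hrn,
    (ofReal_le_sphereProduct_forall_Fnet_Ffun_le hn3 (by linarith) hρ hN' hr0 hr').trans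
      (measure_mono fun θ hθ η hη t => (hθ η hη t).trans ?_)⟩
  have error_nonneg : 0 ≤ n / r ^ 2 + (Real.log n) ^ 2 / n + 1 / r := by positivity
  have factor_le := inv_one_sub_two_mul_le ⟨hρ0.le, hρ1.le⟩
  rw [show r / √n * √((n - 3) / ((r * (1 + ρ)) ^ 2 + (n - 3))) * √n * t / r =
    √((n - 3) / ((r * (1 + ρ)) ^ 2 + (n - 3))) * t by field_simp]
  gcongr
  · exact gphi_nonneg _
  · linarith

/-- the union bound (Lemma 3.4): with probability at least `1 − e^{−5n}`,
simultaneously for all `η ∈ F_ρ` and all `t`,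
`F(η,t) ≤ C₆√((n/N)log(1/ρ)) + (1+C₇(ρ+n/r²+(log n)²/n+1/r))(√n/r)φ(q√n t/r)`. -/
theorem Ffun_union_bound_on_net :
    ∃ C₁ C₂ C' C₆ C₇ : ℝ, 0 < C₁ ∧ 0 < C₂ ∧ 0 < C' ∧ 0 < C₆ ∧ 0 < C₇ ∧
      ∀ n : ℕ, 0 < n → ∀ ρ : ℝ, ρ ∈ Set.Ioo (0 : ℝ) (1 / 3) →
        ∀ N : ℕ, C₁ * n * Real.log (1 / ρ) ≤ N → (N : ℝ) ≤ (n : ℝ) ^ 10 →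
          ∀ r : ℝ, C₂ * Real.sqrt n ≤ r → r ≤ n →
            ∃ q : ℝ, 1 - C' * (ρ + n / r ^ 2) ≤ q ∧
              ENNReal.ofReal (1 - Real.exp (-(5 * n))) ≤
                sphereProduct n N
                  {θ | ∀ η ∈ Fnet n ρ, ∀ t : ℝ,
                    Ffun r t θ η ≤
                      C₆ * Real.sqrt ((n / N) * Real.log (1 / ρ)) +
                        (1 + C₇ * (ρ + n / r ^ 2 + (Real.log n) ^ 2 / n + 1 / r)) *
                          (Real.sqrt n / r) * gphi (q * Real.sqrt n * t / r)} := by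
  obtain ⟨C₁, C₂, C', C₆, C₇, h₁, h₂, h', h₆, h₇, bound⟩ :=
    Ffun_union_bound_on_net_general (A := 10) (by norm_num)
  exact ⟨C₁, C₂, C', C₆, C₇, h₁, h₂, h', h₆, h₇, fun n hn ρ hρ N hN hN' =>
    bound n hn ρ hρ N hN (hN'.trans (natCast_pow_le_exp_mul n 10))⟩
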